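/- arXiv:1606.09052 — 2 statements merged into one kernel-verified Lean document; each statement's English description precedes it below -/
import Mathlib

section
/- The conserved quantities commute among themselves: under these hypotheses, C_m·C_p = C_p·C_m for all 0 ≤ m,p ≤ r+1. -/
/-- ξ_{α,n} := M_{α,n} · M_{α,n+1}⁻¹ -/
def xiv {R : Type*} [Ring R] (M Mi : ℕ → ℤ → R) (α : ℕ) (n : ℤ) : R :=
  M α n * Mi α (n + 1)

/-- ξ_{α,n}⁻¹ = M_{α,n+1} · M_{α,n}⁻¹ -/
def xivInv {R : Type*} [Ring R] (M Mi : ℕ → ℤ → R) (α : ℕ) (n : ℤ) : R :=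
  M α (n + 1) * Mi α n

/-- x_{α,n} := ξ_{α,n}⁻¹ · ξ_{α-1,n} -/
def xv {R : Type*} [Ring R] (M Mi : ℕ → ℤ → R) (α : ℕ) (n : ℤ) : R :=
  xivInv M Mi α n * xiv M Mi (α - 1) n

/-- The Miura coefficient C_{m,n} = Σ_{r+1 ≥ α₁ > ⋯ > α_m ≥ 1}
∏_{j=1}^m x_{α_j, n+(r+1-α_j)-(j-1)} (ordered product, j increasing left to right). -/
def CMiura {R : Type*} [Ring R] (M Mi : ℕ → ℤ → R) (r : ℕ) (m : ℕ) (n : ℤ) : R :=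
  ∑ S ∈ Finset.powersetCard m (Finset.Icc 1 (r + 1)),
    (((S.sort (· ≤ ·)).reverse.zipIdx).map
      (fun ji => xv M Mi ji.1 (n + ((r : ℤ) + 1 - (ji.1 : ℤ)) - (ji.2 : ℤ)))).prod

set_option linter.unusedSimpArgs false


def TT {K S : Type*} [CommRing K] [Ring S] [Algebra K S] (x b : ℕ → S) (u : K) : ℕ → S
  | 0 => 1
  | 1 => 1 + u • x 1
  | (k+2) => TT x b u (k+1) + u • (x (k+2) * TT x b u (k+1)) - u • (b (k+1) * TT x b u k)

theorem TT_comm_of {K S : Type*} [CommRing K] [Ring S] [Algebra K S] (x b : ℕ → S) (u : K) (z : S)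
    (k : ℕ) (hx : ∀ i, 1 ≤ i → i ≤ k → Commute z (x i))
    (hb : ∀ i, 1 ≤ i → i + 1 ≤ k → Commute z (b i)) : Commute z (TT x b u k) := by
  induction k using Nat.twoStepInduction with
  | zero => simp [TT]
  | one =>
    simp only [TT]
    exact (Commute.one_right z).add_right ((hx 1 le_rfl le_rfl).smul_right u)
  | more k ih0 ih1 =>
    simp only [TT]
    have h0 := ih0 (fun i h1 h2 => hx i h1 (by omega)) (fun i h1 h2 => hb i h1 (by omega))
    have h1 := ih1 (fun i h1 h2 => hx i h1 (by omega)) (fun i h1 h2 => hb i h1 (by omega))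
    exact (h1.add_right (((hx (k+2) (by omega) le_rfl).mul_right h1).smul_right u)).sub_right
      (((hb (k+1) (by omega) (by omega)).mul_right h0).smul_right u)


/-- The inductive step. -/
theorem TT_step {K S : Type*} [CommRing K] [Ring S] [Algebra K S] (q qi s t : K) (hqi : qi * q = 1)
    (x b At As Bt Bs Nt Ns : S)
    (hNt : Nt = At + t • (x * At) - t • (b * Bt))
    (hNs : Ns = As + s • (x * As) - s • (b * Bs))
    (hxb : x * b = qi • (b * x))
    (hAtx : At * x = x * At) (hAsx : As * x = x * As)
    (hBtx : Bt * x = x * Bt) (hBsx : Bs * x = x * Bs)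
    (hBtb : Bt * b = b * Bt) (hBsb : Bs * b = b * Bs)
    (hAtb : At * b = q • (b * At) + (1 - q) • (b * Bt))
    (hAsb : As * b = q • (b * As) + (1 - q) • (b * Bs))
    (hA : At * As = As * At) (hB : Bt * Bs = Bs * Bt)
    (h1 : At * Bs - Bs * At = As * Bt - Bt * As)
    (h2 : (s * q) • (At * Bs) + (s * (1 - q)) • (Bt * Bs) + t • (Bt * As) =
      (t * q) • (As * Bt) + (t * (1 - q)) • (Bs * Bt) + s • (Bs * At)) :
    Nt * Ns = Ns * Nt ∧ Nt * As - As * Nt = Ns * At - At * Ns ∧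
    (s * q) • (Nt * As) + (s * (1 - q)) • (At * As) + t • (At * Ns) =
      (t * q) • (Ns * At) + (t * (1 - q)) • (As * At) + s • (As * Nt) := by
  have r : ∀ {a b c d : S}, a * b = c * d → ∀ z, a * (b * z) = c * (d * z) := by
    intro a b c d h z; rw [← mul_assoc, h, mul_assoc]
  have hxb' : ∀ z, x * (b * z) = qi • (b * (x * z)) := by
    intro z; rw [← mul_assoc, hxb, smul_mul_assoc, mul_assoc]
  have hAtb' : ∀ z, At * (b * z) = q • (b * (At * z)) + (1 - q) • (b * (Bt * z)) := by
    intro z; rw [← mul_assoc, hAtb, add_mul, smul_mul_assoc, smul_mul_assoc, mul_assoc, mul_assoc]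
  have hAsb' : ∀ z, As * (b * z) = q • (b * (As * z)) + (1 - q) • (b * (Bs * z)) := by
    intro z; rw [← mul_assoc, hAsb, add_mul, smul_mul_assoc, smul_mul_assoc, mul_assoc, mul_assoc]
  have g1 := congrArg (b * ·) h1
  have g2 := congrArg (b * ·) h2
  have g1x := congrArg (fun z => b * (x * z)) h1
  simp only [mul_add, mul_sub, mul_smul_comm, hB] at g1 g2 g1x
  subst hNt hNs
  refine ⟨?_, ?_, ?_⟩
  · simp only [mul_add, add_mul, mul_sub, sub_mul, mul_smul_comm, smul_mul_assoc, mul_assoc, hxb,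
      hxb', hAtb, hAtb', hAsb, hAsb', hAtx, r hAtx, hAsx, r hAsx, hBtx, r hBtx, hBsx, r hBsx, hBtb,
      r hBtb, hBsb, r hBsb, hA, hB, smul_add, smul_sub]
    have e : ∀ z : S, qi • q • z = z := by intro z; rw [smul_smul, hqi, one_smul]
    have e' : ∀ z : S, q • qi • z = z := by intro z; rw [smul_smul, mul_comm, hqi, one_smul]
    linear_combination (norm := module) (-1:K) • g2 - (s*t) • g1x 
      + (s*t) • e (b * (x * (As * Bt))) - (s*t) • e (b * (x * (At * Bs)))
  · simp only [mul_add, add_mul, mul_sub, sub_mul, mul_smul_comm, smul_mul_assoc, mul_assoc, hxb,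
      hxb', hAtb, hAtb', hAsb, hAsb', hAtx, r hAtx, hAsx, r hAsx, hBtx, r hBtx, hBsx, r hBsx, hBtb,
      r hBtb, hBsb, r hBsb, hA, hB, smul_add, smul_sub]
    linear_combination (norm := module) (-1:K) • g2
  · simp only [mul_add, add_mul, mul_sub, sub_mul, mul_smul_comm, smul_mul_assoc, mul_assoc, hxb,
      hxb', hAtb, hAtb', hAsb, hAsb', hAtx, r hAtx, hAsx, r hAsx, hBtx, r hBtx, hBsx, r hBsx, hBtb,
      r hBtb, hBsb, r hBsb, hA, hB, smul_add, smul_sub]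
    linear_combination (norm := module) (-(s*t*q):K) • g1

theorem TT_comm {K S : Type*} [CommRing K] [Ring S] [Algebra K S] (q qi s t : K) (hqi : qi * q = 1)
    (x b : ℕ → S) (N : ℕ)
    (hxx : ∀ i j, 1 ≤ i → i ≤ N → 1 ≤ j → j ≤ N → Commute (x i) (x j))
    (hbx : ∀ i j, 1 ≤ i → i ≤ N → 1 ≤ j → j + 1 ≤ N → (i < j ∨ j + 2 ≤ i) → Commute (b j) (x i))
    (hbx0 : ∀ k, 1 ≤ k → k + 1 ≤ N → x k * b k = q • (b k * x k))
    (hbx1 : ∀ k, 1 ≤ k → k + 1 ≤ N → x (k+1) * b k = qi • (b k * x (k+1)))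
    (hbb : ∀ i j, 1 ≤ i → i + 2 ≤ j → j + 1 ≤ N → Commute (b i) (b j))
    (hbb1 : ∀ k, 1 ≤ k → k + 2 ≤ N → b k * b (k+1) = q • (b (k+1) * b k))
    (k : ℕ) (hk : k ≤ N) : Commute (TT x b t k) (TT x b s k) := by
  have hA (u : K) (k : ℕ) (hk : k + 1 ≤ N) : TT x b u k * x (k+1) = x (k+1) * TT x b u k :=
    (TT_comm_of x b u _ k (fun i h1 h2 => hxx _ _ (by omega) hk h1 (by omega))
      (fun i h1 h2 => (hbx _ _ (by omega) hk h1 (by omega) (by omega)).symm)).symm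
  have hA2 (u : K) (k : ℕ) (hk : k + 2 ≤ N) : TT x b u k * x (k+2) = x (k+2) * TT x b u k :=
    (TT_comm_of x b u _ k (fun i h1 h2 => hxx _ _ (by omega) hk h1 (by omega))
      (fun i h1 h2 => (hbx _ _ (by omega) hk h1 (by omega) (by omega)).symm)).symm
  have hB (u : K) (k : ℕ) (hk : k + 2 ≤ N) : TT x b u k * b (k+1) = b (k+1) * TT x b u k :=
    (TT_comm_of x b u _ k (fun i h1 h2 => hbx _ _ (by omega) (by omega) (by omega) (by omega) (by omega))
      (fun i h1 h2 => (hbb _ _ h1 (by omega) (by omega)).symm)).symm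
  have hB2 (u : K) (k : ℕ) (hk : k + 3 ≤ N) : TT x b u k * b (k+2) = b (k+2) * TT x b u k :=
    (TT_comm_of x b u _ k (fun i h1 h2 => hbx _ _ (by omega) (by omega) (by omega) (by omega) (by omega))
      (fun i h1 h2 => (hbb _ _ h1 (by omega) (by omega)).symm)).symm
  have hAb (u : K) (k : ℕ) (hk : k + 2 ≤ N) : TT x b u (k+1) * b (k+1) =
      q • (b (k+1) * TT x b u (k+1)) + (1 - q) • (b (k+1) * TT x b u k) := by
    cases k with
    | zero =>
      simp only [TT, add_mul, mul_add, smul_mul_assoc, mul_smul_comm, one_mul, mul_one, zero_add,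
        hbx0 1 le_rfl (by omega)]
      module
    | succ k =>
      have e1 := hB u (k+1) (by omega)
      have e2 := hB2 u k (by omega)
      have e3 : x (k+2) * (b (k+2) * TT x b u (k+1)) = q • (b (k+2) * (x (k+2) * TT x b u (k+1))) := by
        rw [← mul_assoc, hbx0 (k+2) (by omega) (by omega), smul_mul_assoc, mul_assoc]
      have e4 : b (k+1) * (b (k+2) * TT x b u k) = q • (b (k+2) * (b (k+1) * TT x b u k)) := by
        rw [← mul_assoc, hbb1 (k+1) (by omega) (by omega), smul_mul_assoc, mul_assoc]
      simp only [TT, add_mul, mul_add, sub_mul, mul_sub, smul_mul_assoc, mul_smul_comm, mul_assoc, 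
        add_assoc, Nat.reduceAdd] at e1 e2 ⊢
      simp only [e1, e2, e3, e4]
      module
  have main : ∀ k, k + 1 ≤ N → 
      (TT x b t k * TT x b s k = TT x b s k * TT x b t k) ∧
      (TT x b t (k+1) * TT x b s (k+1) = TT x b s (k+1) * TT x b t (k+1)) ∧
      (TT x b t (k+1) * TT x b s k - TT x b s k * TT x b t (k+1) = 
        TT x b s (k+1) * TT x b t k - TT x b t k * TT x b s (k+1)) ∧
      ((s * q) • (TT x b t (k+1) * TT x b s k) + (s * (1 - q)) • (TT x b t k * TT x b s k) 
          + t • (TT x b t k * TT x b s (k+1)) =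
        (t * q) • (TT x b s (k+1) * TT x b t k) + (t * (1 - q)) • (TT x b s k * TT x b t k) 
          + s • (TT x b s k * TT x b t (k+1))) := by
    intro k
    induction k with
    | zero =>
      intro _
      refine ⟨by simp [TT], ?_, by simp [TT], ?_⟩
      · simp only [TT, add_mul, mul_add, smul_mul_assoc, mul_smul_comm, one_mul, mul_one, zero_add]
        module
      · simp only [TT, add_mul, mul_add, smul_mul_assoc, mul_smul_comm, one_mul, mul_one, zero_add]
        module
    | succ k ih =>
      intro hk
      obtain ⟨i1, i2, i3, i4⟩ := ih (by omega)
      refine ⟨i2, ?_⟩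
      exact TT_step q qi s t hqi (x (k+2)) (b (k+1)) _ _ _ _ _ _ (by rw [TT]) (by rw [TT])
        (hbx1 (k+1) (by omega) hk) (hA _ _ hk) (hA _ _ hk) (hA2 _ _ hk) (hA2 _ _ hk)
        (hB _ _ hk) (hB _ _ hk) (hAb _ _ hk) (hAb _ _ hk) i2 i1 i3 i4
  cases k with
  | zero => simp [TT]
  | succ k => exact (main k hk).2.1

def aa {K S : Type*} [CommRing K] [Ring S] [Algebra K S] (x : ℕ → ℤ → S) (u : K) : ℕ → ℤ → S
  | 0, _ => 1
  | (k+1), n => aa x u k (n+1) + u • (x (k+1) n * aa x u k n)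

theorem aa_shift {K S : Type*} [CommRing K] [Ring S] [Algebra K S] (x b : ℕ → ℤ → S) (u : K)
    (r : ℕ) (h0 : ∀ n, x 1 (n+1) = x 1 n - b 1 n)
    (h1 : ∀ k n, 1 ≤ k → k + 1 ≤ r → x (k+1) (n+1) - x (k+1) n = b k (n+1) - b (k+1) n)
    (h2 : ∀ k n, 1 ≤ k → k + 1 ≤ r → x (k+1) (n+1) * b k n = b k (n+1) * x k n)
    (k : ℕ) (hk : k + 1 ≤ r) (n : ℤ) :
    aa x u (k+1) (n+1) = aa x u (k+1) n - u • (b (k+1) n * aa x u k n) := by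
  induction k generalizing n with
  | zero =>
    simp only [aa, zero_add, mul_one, h0]
    module
  | succ k ih =>
    have e1 := ih (by omega) n
    have e2 := ih (by omega) (n+1)
    have e3 : aa x u (k+1) n = aa x u k (n+1) + u • (x (k+1) n * aa x u k n) := by rw [aa]
    have f1 := h1 (k+1) n (by omega) hk
    have f2 := h2 (k+1) n (by omega) hk
    have e4 : aa x u (k+2) (n+1) = aa x u (k+1) (n+1+1) + u • (x (k+2) (n+1) * aa x u (k+1) (n+1)) := by
      rw [aa]
    have e5 : aa x u (k+2) n = aa x u (k+1) (n+1) + u • (x (k+2) n * aa x u (k+1) n) := by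
      rw [aa]
    have g1 : x (k+2) (n+1) * aa x u (k+1) n - x (k+2) n * aa x u (k+1) n = 
      b (k+1) (n+1) * aa x u (k+1) n - b (k+2) n * aa x u (k+1) n := by
      rw [← sub_mul, ← sub_mul, f1]
    have g2 : x (k+2) (n+1) * (b (k+1) n * aa x u k n) = b (k+1) (n+1) * (x (k+1) n * aa x u k n) := by
      rw [← mul_assoc, f2, mul_assoc]
    have g3 : b (k+1) (n+1) * aa x u (k+1) n = b (k+1) (n+1) * aa x u k (n+1) 
        + u • (b (k+1) (n+1) * (x (k+1) n * aa x u k n)) := by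
      rw [e3, mul_add, mul_smul_comm]
    have g4 : x (k+2) (n+1) * aa x u (k+1) (n+1) = x (k+2) (n+1) * aa x u (k+1) n 
        - u • (x (k+2) (n+1) * (b (k+1) n * aa x u k n)) := by
      rw [e1, mul_sub, mul_smul_comm]
    show aa x u (k+2) (n+1) = aa x u (k+2) n - u • (b (k+2) n * aa x u (k+1) n)
    rw [e4, e5, e2, g4, g2]
    linear_combination (norm := module) u • g1 + u • g3

theorem aa_eq_TT {K S : Type*} [CommRing K] [Ring S] [Algebra K S] (x b : ℕ → ℤ → S) (u : K)
    (r : ℕ) (h0 : ∀ n, x 1 (n+1) = x 1 n - b 1 n)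
    (h1 : ∀ k n, 1 ≤ k → k + 1 ≤ r → x (k+1) (n+1) - x (k+1) n = b k (n+1) - b (k+1) n)
    (h2 : ∀ k n, 1 ≤ k → k + 1 ≤ r → x (k+1) (n+1) * b k n = b k (n+1) * x k n)
    (k : ℕ) (hk : k ≤ r + 1) (n : ℤ) :
    aa x u k n = TT (fun i => x i n) (fun i => b i n) u k := by
  induction k using Nat.twoStepInduction with
  | zero => simp [TT, aa]
  | one => simp [TT, aa]
  | more k ih0 ih1 =>
    rw [TT, ← ih0 (by omega), ← ih1 (by omega), aa, aa_shift x b u r h0 h1 h2 k (by omega) n]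
    module

open Polynomial in
noncomputable def PP {R : Type*} [Ring R] (x : ℕ → ℤ → R) : ℕ → ℤ → R[X]
  | 0, _ => 1
  | (k+1), n => PP x k (n+1) + X * (C (x (k+1) n) * PP x k n)

open Polynomial in
theorem PP_comm {R : Type*} [Ring R] (q qi : R) (hqi : qi * q = 1) (hq : ∀ z, q * z = z * q)
    (hqi' : ∀ z, qi * z = z * qi)
    (x b : ℕ → ℤ → R) (r : ℕ) 
    (h0 : ∀ n, x 1 (n+1) = x 1 n - b 1 n)
    (h1 : ∀ k n, 1 ≤ k → k + 1 ≤ r → x (k+1) (n+1) - x (k+1) n = b k (n+1) - b (k+1) n)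
    (h2 : ∀ k n, 1 ≤ k → k + 1 ≤ r → x (k+1) (n+1) * b k n = b k (n+1) * x k n)
    (n : ℤ)
    (hxx : ∀ i j, 1 ≤ i → i ≤ r + 1 → 1 ≤ j → j ≤ r + 1 → x i n * x j n = x j n * x i n)
    (hbx : ∀ i j, 1 ≤ i → i ≤ r + 1 → 1 ≤ j → j ≤ r → (i < j ∨ j + 2 ≤ i) →
      b j n * x i n = x i n * b j n)
    (hbx0 : ∀ k, 1 ≤ k → k ≤ r → x k n * b k n = q * (b k n * x k n))
    (hbx1 : ∀ k, 1 ≤ k → k ≤ r → x (k+1) n * b k n = qi * (b k n * x (k+1) n))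
    (hbb : ∀ i j, 1 ≤ i → i + 2 ≤ j → j ≤ r → b i n * b j n = b j n * b i n)
    (hbb1 : ∀ k, 1 ≤ k → k + 1 ≤ r → b k n * b (k+1) n = q * (b (k+1) n * b k n))
    (m p : ℕ) : (PP x (r+1) n).coeff m * (PP x (r+1) n).coeff p = 
      (PP x (r+1) n).coeff p * (PP x (r+1) n).coeff m := by
  have cC : ∀ {A : Type _} [Ring A] (a : A), (∀ z, a * z = z * a) → ∀ z : A[X], C a * z = z * C a := by
    intro A _ a h z
    ext i
    rw [coeff_C_mul, coeff_mul_C, h]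
  have cX : ∀ {A : Type _} [Ring A] (z : A[X]), X * z = z * X := by
    intro A _ z
    exact X_mul
  let CC : R →+* R[X][X] := C.comp C
  let Z := Subring.center R[X][X]
  let s : Z := ⟨C X, Subring.mem_center_iff.2 fun g => (cC _ cX g).symm⟩
  let t : Z := ⟨X, Subring.mem_center_iff.2 fun g => (cX g).symm⟩
  let Q : Z := ⟨CC q, Subring.mem_center_iff.2 fun g => (cC _ (cC _ hq) g).symm⟩
  let Qi : Z := ⟨CC qi, Subring.mem_center_iff.2 fun g => (cC _ (cC _ hqi') g).symm⟩
  have hs : ∀ z : R[X][X], s • z = C X * z := fun z => rfl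
  have ht : ∀ z : R[X][X], t • z = X * z := fun z => rfl
  have hQ : ∀ z : R[X][X], Q • z = CC q * z := fun z => rfl
  have hQi : ∀ z : R[X][X], Qi • z = CC qi * z := fun z => rfl
  have hQQ : Qi * Q = 1 := by
    apply Subtype.ext
    show CC qi * CC q = 1
    rw [← map_mul, hqi, map_one]
  have es : ∀ k n, C (PP x k n) = aa (fun k n => CC (x k n)) s k n := by
    intro k
    induction k with
    | zero => intro n; simp [PP, aa]
    | succ k ih =>
      intro n
      rw [PP, aa, ← ih, ← ih, hs]
      simp [CC]
  have et : ∀ k n, (PP x k n).map C = aa (fun k n => CC (x k n)) t k n := by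
    intro k
    induction k with
    | zero => intro n; simp [PP, aa]
    | succ k ih =>
      intro n
      rw [PP, aa, ← ih, ← ih, ht]
      simp [CC]
  have key : ∀ u : Z, ∀ k, k ≤ r + 1 → ∀ n, aa (fun k n => CC (x k n)) u k n = _ := fun u k hk n =>
    aa_eq_TT (fun k n => CC (x k n)) (fun k n => CC (b k n)) u r 
      (fun n => by simp only [← map_sub, h0])
      (fun k n a c => by simp only [← map_sub, h1 k n a c])
      (fun k n a c => by simp only [← map_mul, h2 k n a c]) k hk n
  have fin := TT_comm Q Qi s t hQQ (fun i => CC (x i n)) (fun i => CC (b i n)) (r+1)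
    (fun i j a b c d => by simp only [Commute, SemiconjBy, ← map_mul, hxx i j a b c d])
    (fun i j a b c d e => by simp only [Commute, SemiconjBy, ← map_mul, hbx i j a b c (by omega) e])
    (fun k a b => by simp only [hQ, ← map_mul, hbx0 k a (by omega)])
    (fun k a b => by simp only [hQi, ← map_mul, hbx1 k a (by omega)])
    (fun i j a b c => by simp only [Commute, SemiconjBy, ← map_mul, hbb i j a b (by omega)])
    (fun k a b => by simp only [hQ, ← map_mul, hbb1 k a (by omega)]) (r+1) le_rfl
  rw [← key _ _ le_rfl, ← key _ _ le_rfl, ← es, ← et] at fin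
  have := congrArg (fun z => (z.coeff p).coeff m) fin.eq
  simpa [coeff_C_mul, coeff_mul_C, coeff_map] using this.symm

/-- generic version of `CMiura` -/
def GG {R : Type*} [Ring R] (x : ℕ → ℤ → R) (k : ℕ) (m : ℕ) (n : ℤ) : R :=
  ∑ S ∈ Finset.powersetCard m (Finset.Icc 1 k),
    (((S.sort (· ≤ ·)).reverse.zipIdx).map
      (fun ji => x ji.1 (n + ((k : ℤ) - (ji.1 : ℤ)) - (ji.2 : ℤ)))).prod

theorem sort_top (S : Finset ℕ) (k : ℕ) (h : ∀ a ∈ S, a < k) :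
    ((insert k S).sort (· ≤ ·)).reverse = k :: (S.sort (· ≤ ·)).reverse := by
  have : ((insert k S).sort (· ≤ ·)) = S.sort (· ≤ ·) ++ [k] := by
    have hk : k ∉ S := fun hh => lt_irrefl _ (h k hh)
    refine List.Perm.eq_of_pairwise (le := (· ≤ ·)) (fun _ _ _ _ => le_antisymm) 
      (Finset.pairwise_sort _ _) ?_ ?_
    · rw [List.pairwise_append]
      refine ⟨Finset.pairwise_sort _ _, by simp, ?_⟩
      intro a ha c hc
      simp at hc ha
      rw [hc]; exact (h a ha).le
    · rw [List.perm_ext_iff_of_nodup (Finset.sort_nodup _ _)]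
      · intro a; simp [or_comm]
      · rw [List.nodup_append]
        refine ⟨Finset.sort_nodup _ _, by simp, ?_⟩
        intro a ha c hc
        simp at hc ha
        rw [hc]; exact (h a ha).ne
  rw [this]; simp

theorem GG_succ {R : Type*} [Ring R] (x : ℕ → ℤ → R) (k m : ℕ) (n : ℤ) :
    GG x (k+1) (m+1) n = GG x k (m+1) (n+1) + x (k+1) n * GG x k m n := by
  unfold GG
  have hI : Finset.Icc 1 (k+1) = insert (k+1) (Finset.Icc 1 k) := by
    ext; simp; omega
  have hn : k + 1 ∉ Finset.Icc 1 k := by simp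
  rw [hI, Finset.powersetCard_succ_insert hn, Finset.sum_union, Finset.sum_image]
  · congr 1
    · refine Finset.sum_congr rfl fun S _ => ?_
      congr 2
      funext ji
      congr 1
      push_cast
      ring
    · rw [Finset.mul_sum]
      refine Finset.sum_congr rfl fun S hS => ?_
      have hS' := (Finset.mem_powersetCard.1 hS).1
      rw [sort_top S (k+1) (fun a ha => by have := Finset.mem_Icc.1 (hS' ha); omega),
        List.zipIdx_cons', List.map_cons, List.prod_cons, List.map_map]
      congr 1
      · congr 1
        push_cast; ring
      · congr 2
        funext ji
        simp only [Function.comp, Prod.map]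
        congr 1
        push_cast
        simp
        ring
  · intro S hS T hT h
    have a1 := fun hh => hn ((Finset.mem_powersetCard.1 hS).1 hh)
    have a2 := fun hh => hn ((Finset.mem_powersetCard.1 hT).1 hh)
    rw [← Finset.erase_insert a1, ← Finset.erase_insert a2, h]
  · rw [Finset.disjoint_left]
    intro S hS hT
    obtain ⟨T, _, rfl⟩ := Finset.mem_image.1 hT
    exact hn ((Finset.mem_powersetCard.1 hS).1 (Finset.mem_insert_self _ _))

theorem GG_eq {R : Type*} [Ring R] (x : ℕ → ℤ → R) (k m : ℕ) (n : ℤ) :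
    GG x k m n = (PP x k n).coeff m := by
  induction k generalizing m n with
  | zero =>
    cases m with
    | zero => simp [GG, PP]
    | succ m =>
      unfold GG
      rw [Finset.powersetCard_eq_empty.2 (by simp)]
      simp [PP, Polynomial.coeff_one]
  | succ k ih =>
    cases m with
    | zero =>
      have h : ∀ k n, (PP x k n).coeff 0 = 1 := by
        intro k
        induction k with
        | zero => simp [PP]
        | succ k ih => intro n; simp [PP, ih]
      rw [h]; simp [GG]
    | succ m =>
      rw [GG_succ, ih, ih, PP]
      simp [Polynomial.coeff_X_mul]

/-- q-commutation in a group -/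
def QC {G : Type*} [Group G] (q X Y : G) (e : ℤ) : Prop := X * Y = q ^ e * (Y * X)

theorem QC.mulR {G : Type*} [Group G] {q X Y Z : G} {e f : ℤ} (hq : ∀ g, Commute q g)
    (h : QC q X Y e) (h' : QC q X Z f) : QC q X (Y * Z) (e + f) := by
  unfold QC at *
  have c := ((hq Y).zpow_left f).eq
  rw [← mul_assoc, h, mul_assoc, mul_assoc, h', ← mul_assoc Y, ← c, zpow_add]
  simp only [mul_assoc]

theorem QC.symm {G : Type*} [Group G] {q X Y : G} {e : ℤ} (h : QC q X Y e) : QC q Y X (-e) := by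
  unfold QC at *
  rw [h]; simp

theorem QC.mulL {G : Type*} [Group G] {q X Y Z : G} {e f : ℤ} (hq : ∀ g, Commute q g)
    (h : QC q X Z e) (h' : QC q Y Z f) : QC q (X * Y) Z (e + f) := by
  have := (QC.mulR hq h.symm h'.symm).symm
  have e' : -(-e + -f) = e + f := by ring
  rwa [e'] at this

theorem QC.invR {G : Type*} [Group G] {q X Y : G} {e : ℤ} (hq : ∀ g, Commute q g)
    (h : QC q X Y e) : QC q X Y⁻¹ (-e) := by
  unfold QC at *
  have c := ((hq Y).zpow_left e).eq
  have : Y⁻¹ * (X * Y) * Y⁻¹ = q ^ e * X * Y⁻¹ := by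
    rw [h, ← mul_assoc (q^e), c]; group
  have h3 : Y⁻¹ * X = q ^ e * X * Y⁻¹ := by rw [← this]; group
  rw [h3]; group

theorem QC.invL {G : Type*} [Group G] {q X Y : G} {e : ℤ} (hq : ∀ g, Commute q g)
    (h : QC q X Y e) : QC q X⁻¹ Y (-e) := by
  have := (QC.invR hq h.symm).symm
  simpa using this

theorem QC.of_eq {G : Type*} [Group G] {q X Y : G} {e : ℤ} (h : QC q X Y e) (f : ℤ) (he : e = f) :
    QC q X Y f := he ▸ h

section grp
variable {G : Type*} [Group G] (a a' : ℕ → G)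

def xU {G : Type*} [Group G] (a a' : ℕ → G) (k : ℕ) : G :=
  (a' k * (a k)⁻¹) * (a (k-1) * (a' (k-1))⁻¹)

def bU {G : Type*} [Group G] (a a' : ℕ → G) (k : ℕ) : G :=
  (a' (k+1) * (a' k)⁻¹) * ((a k)⁻¹ * a (k-1))

theorem mono_QC {G : Type*} [Group G] (q : G) (hq : ∀ g, Commute q g) (a a' : ℕ → G) (N : ℕ)
    (haa : ∀ i j, i ≤ N → j ≤ N → QC q (a i) (a j) 0)
    (haa' : ∀ i j, i ≤ N → j ≤ N → QC q (a' i) (a' j) 0)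
    (hc : ∀ i j, i ≤ N → j ≤ N → QC q (a i) (a' j) (min i j : ℕ)) :
    (∀ i j, 1 ≤ i → i ≤ N → 1 ≤ j → j ≤ N → QC q (xU a a' i) (xU a a' j) 0) ∧
    (∀ i j, 1 ≤ i → i ≤ N → 1 ≤ j → j + 1 ≤ N → QC q (xU a a' i) (bU a a' j)
      ((if i = j then 1 else 0) - (if i = j + 1 then 1 else 0))) ∧
    (∀ i j, 1 ≤ i → i + 1 ≤ N → 1 ≤ j → j + 1 ≤ N → QC q (bU a a' i) (bU a a' j)
      ((if j = i + 1 then 1 else 0) - (if i = j + 1 then 1 else 0))) := by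
  have hx : ∀ i k, 1 ≤ i → i ≤ N → k ≤ N → QC q (a k) (xU a a' i) (if i ≤ k then 1 else 0) := by
    intro i k h1 h2 h3
    refine QC.of_eq (QC.mulR hq (QC.mulR hq (hc _ _ h3 h2) (QC.invR hq (haa _ _ h3 h2)))
      (QC.mulR hq (haa _ _ h3 (by omega)) (QC.invR hq (hc _ _ h3 (by omega))))) _ ?_
    split_ifs <;> omega
  have hx' : ∀ i k, 1 ≤ i → i ≤ N → k ≤ N → QC q (a' k) (xU a a' i) (if i ≤ k then 1 else 0) := by
    intro i k h1 h2 h3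
    refine QC.of_eq (QC.mulR hq (QC.mulR hq (haa' _ _ h3 h2) (QC.invR hq (hc _ _ h2 h3).symm))
      (QC.mulR hq (hc _ _ (by omega) h3).symm (QC.invR hq (haa' _ _ h3 (by omega))))) _ ?_
    split_ifs <;> omega
  have hb : ∀ i k, 1 ≤ i → i + 1 ≤ N → k ≤ N → QC q (a k) (bU a a' i) (if i + 1 ≤ k then 1 else 0) := by
    intro i k h1 h2 h3
    refine QC.of_eq (QC.mulR hq (QC.mulR hq (hc _ _ h3 h2) (QC.invR hq (hc _ _ h3 (by omega))))
      (QC.mulR hq (QC.invR hq (haa _ _ h3 (by omega))) (haa _ _ h3 (by omega)))) _ ?_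
    split_ifs <;> omega
  have hb' : ∀ i k, 1 ≤ i → i + 1 ≤ N → k ≤ N → QC q (a' k) (bU a a' i) (if i ≤ k then 1 else 0) := by
    intro i k h1 h2 h3
    refine QC.of_eq (QC.mulR hq (QC.mulR hq (haa' _ _ h3 h2) (QC.invR hq (haa' _ _ h3 (by omega))))
      (QC.mulR hq (QC.invR hq (hc _ _ (by omega) h3).symm) (hc _ _ (by omega) h3).symm)) _ ?_
    split_ifs <;> omega
  refine ⟨?_, ?_, ?_⟩
  · intro i j h1 h2 h3 h4
    refine QC.of_eq (QC.mulL hq (QC.mulL hq (hx' j _ h3 h4 h2) (QC.invL hq (hx j _ h3 h4 h2)))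
      (QC.mulL hq (hx j _ h3 h4 (by omega)) (QC.invL hq (hx' j _ h3 h4 (by omega))))) _ ?_
    split_ifs <;> omega
  · intro i j h1 h2 h3 h4
    refine QC.of_eq (QC.mulL hq (QC.mulL hq (hb' j _ h3 h4 h2) (QC.invL hq (hb j _ h3 h4 h2)))
      (QC.mulL hq (hb j _ h3 h4 (by omega)) (QC.invL hq (hb' j _ h3 h4 (by omega))))) _ ?_
    split_ifs <;> omega
  · intro i j h1 h2 h3 h4
    refine QC.of_eq (QC.mulL hq (QC.mulL hq (hb' j _ h3 h4 h2) (QC.invL hq (hb' j _ h3 h4 (by omega))))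
      (QC.mulL hq (QC.invL hq (hb j _ h3 h4 (by omega))) (hb j _ h3 h4 (by omega)))) _ ?_
    split_ifs <;> omega

theorem QC.comm {G : Type*} [Group G] {q X Y : G} (h : QC q X Y 0) : X * Y = Y * X := by
  simpa [QC] using h

/-- the two expressions for `b` -/
theorem bU_eq {G : Type*} [Group G] (q : G) (hq : ∀ g, Commute q g) (a a' : ℕ → G) (N : ℕ)
    (haa : ∀ i j, i ≤ N → j ≤ N → QC q (a i) (a j) 0)
    (haa' : ∀ i j, i ≤ N → j ≤ N → QC q (a' i) (a' j) 0)
    (hc : ∀ i j, i ≤ N → j ≤ N → QC q (a i) (a' j) (min i j : ℕ)) (j : ℕ) (h1 : 1 ≤ j)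
    (h2 : j + 1 ≤ N) :
    a' (j+1) * a' (j-1) * (a' j)⁻¹ * (a j)⁻¹ * (a (j-1) * (a' (j-1))⁻¹) = bU a a' j ∧
    a' (j+1) * (a (j+1))⁻¹ * (a j * (a' j)⁻¹ * (a (j+1) * a (j-1) * (a j)⁻¹ * (a j)⁻¹)) = bU a a' j := by
  constructor
  · have c1 : ((a j)⁻¹ * a (j-1)) * a' (j-1) = a' (j-1) * ((a j)⁻¹ * a (j-1)) := by
      apply QC.comm (q := q)
      refine QC.of_eq (QC.mulL hq (QC.invL hq (hc _ _ (by omega) (by omega)))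
        (hc _ _ (by omega) (by omega))) _ (by omega)
    have c2 : (a' j)⁻¹ * a' (j-1) = a' (j-1) * (a' j)⁻¹ := by
      apply QC.comm (q := q)
      exact QC.of_eq (QC.invL hq (haa' _ _ (by omega) (by omega))) _ (by omega)
    unfold bU
    calc _ = a' (j+1) * (a' (j-1) * (a' j)⁻¹) * ((a j)⁻¹ * a (j-1)) * (a' (j-1))⁻¹ := by group
      _ = a' (j+1) * (a' j)⁻¹ * (a' (j-1) * ((a j)⁻¹ * a (j-1))) * (a' (j-1))⁻¹ := by
        rw [← c2]; group
      _ = _ := by rw [← c1]; group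
  · have c1 : ((a (j+1))⁻¹ * a j) * (a' j)⁻¹ = (a' j)⁻¹ * ((a (j+1))⁻¹ * a j) := by
      apply QC.comm (q := q)
      refine QC.of_eq (QC.mulL hq (QC.invL hq (QC.invR hq (hc _ _ (by omega) (by omega))))
        (QC.invR hq (hc _ _ (by omega) (by omega)))) _ (by omega)
    have c2 : a j * a (j+1) = a (j+1) * a j := (haa _ _ (by omega) (by omega)).comm
    have c3 : a j * a (j-1) = a (j-1) * a j := (haa _ _ (by omega) (by omega)).comm
    have c4 : (a j)⁻¹ * a (j-1) = a (j-1) * (a j)⁻¹ := by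
      apply QC.comm (q := q)
      exact QC.of_eq (QC.invL hq (haa _ _ (by omega) (by omega))) _ (by omega)
    unfold bU
    calc _ = a' (j+1) * (((a (j+1))⁻¹ * a j) * (a' j)⁻¹) * a (j+1) * a (j-1) * (a j)⁻¹ * (a j)⁻¹ := by group
      _ = a' (j+1) * (a' j)⁻¹ * (a (j+1))⁻¹ * (a j * a (j+1)) * a (j-1) * (a j)⁻¹ * (a j)⁻¹ := by
        rw [c1]; group
      _ = a' (j+1) * (a' j)⁻¹ * (a j * a (j-1)) * (a j)⁻¹ * (a j)⁻¹ := by rw [c2]; group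
      _ = a' (j+1) * (a' j)⁻¹ * (a (j-1) * (a j)⁻¹) := by rw [c3]; group
      _ = _ := by rw [c4]
end grp

theorem quantum_Q_conserved_quantities_commute
    {R : Type*} [Ring R] (q A Δ : Rˣ)
    (hq : ∀ x : R, (q : R) * x = x * (q : R))
    (r : ℕ) (hr : 1 ≤ r)
    (M Mi : ℕ → ℤ → R)
    (hM0 : ∀ n : ℤ, M 0 n = 1)
    (hMtop : ∀ n : ℤ, M (r + 2) n = 0)
    (hMiL : ∀ (α : ℕ) (n : ℤ), α ≤ r + 1 → M α n * Mi α n = 1)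
    (hMiR : ∀ (α : ℕ) (n : ℤ), α ≤ r + 1 → Mi α n * M α n = 1)
    (hMsys : ∀ (α : ℕ) (n : ℤ), 1 ≤ α → α ≤ r + 1 →
      (q : R) ^ α * M α (n + 1) * M α (n - 1) = M α n ^ 2 - M (α + 1) n * M (α - 1) n)
    (hcom : ∀ (α β ε : ℕ) (n : ℤ), ε ≤ 1 → α ≤ r + 1 → β ≤ r + 1 →
      M α n * M β (n + (ε : ℤ)) = (q : R) ^ (ε * min α β) * M β (n + (ε : ℤ)) * M α n)
    (hAΔ : ∀ n : ℤ, M (r + 1) n = ((A ^ n : Rˣ) : R) * (Δ : R))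
    (hΔM : ∀ (α : ℕ) (n : ℤ), 1 ≤ α → α ≤ r + 1 →
      (Δ : R) * M α n = ((q ^ ((α : ℤ) * n) : Rˣ) : R) * M α n * (Δ : R))
    (hAM : ∀ (α : ℕ) (n : ℤ), 1 ≤ α → α ≤ r + 1 →
      (A : R) * M α n = ((q ^ (-(α : ℤ)) : Rˣ) : R) * M α n * (A : R))
    (hΔA : (Δ : R) * (A : R) = (q : R) ^ (r + 1) * (A : R) * (Δ : R))
    (hext : ∀ (α β : ℕ) (n p : ℤ), α ≤ r + 1 → β ≤ r + 1 →
      |p| ≤ |(β : ℤ) - (α : ℤ)| + 1 →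
      M α n * M β (n + p) = ((q ^ (p * ((min α β : ℕ) : ℤ)) : Rˣ) : R) * M β (n + p) * M α n) :
    ∀ m p : ℕ, m ≤ r + 1 → p ≤ r + 1 →
      CMiura M Mi r m 0 * CMiura M Mi r p 0 = CMiura M Mi r p 0 * CMiura M Mi r m 0 := by
  intro m p _ _
  have hCG : ∀ m, CMiura M Mi r m 0 = GG (xv M Mi) (r+1) m 0 := by
    intro m
    unfold CMiura GG
    push_cast
    rfl
  rw [hCG, hCG, GG_eq, GG_eq]
  have hqc : ∀ g : Rˣ, Commute q g := fun g => Units.ext (hq g)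
  let U : ℕ → ℤ → Rˣ := fun k n =>
    if h : k ≤ r + 1 then ⟨M k n, Mi k n, hMiL k n h, hMiR k n h⟩ else 1
  have hU : ∀ k n, k ≤ r + 1 → M k n = (U k n : R) := by
    intro k n h; simp only [U, dif_pos h]
  have hUi : ∀ k n, k ≤ r + 1 → Mi k n = ((U k n)⁻¹ : Rˣ) := by
    intro k n h; simp only [U, dif_pos h]; rfl
  have haa : ∀ n i j, i ≤ r + 1 → j ≤ r + 1 → QC q (U i n) (U j n) 0 := by
    intro n i j hi hj
    have := hcom i j 0 n (by omega) hi hj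
    simp only [Nat.cast_zero, add_zero, zero_mul, pow_zero, one_mul, hU i n hi, hU j n hj] at this
    apply Units.ext
    simpa using this
  have hc : ∀ n i j, i ≤ r + 1 → j ≤ r + 1 → QC q (U i n) (U j (n+1)) (min i j : ℕ) := by
    intro n i j hi hj
    have := hcom i j 1 n (by omega) hi hj
    simp only [Nat.cast_one, one_mul, hU i n hi, hU j (n+1) hj] at this
    apply Units.ext
    rw [zpow_natCast]
    simpa [mul_assoc] using this
  have hZ : ∀ k n, 1 ≤ k → k ≤ r → xivInv M Mi k n - xivInv M Mi k (n+1) =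
      M (k+1) (n+1) * M (k-1) (n+1) * Mi k (n+1) * Mi k n := by
    intro k n h1 h2
    have e1 := hMsys k (n+1) h1 (by omega)
    rw [add_sub_cancel_right] at e1
    have e2 : Mi k (n+1) = (q:R)^k * M k n * Mi k (n+1) * Mi k n := by
      have := hc n k k (by omega) (by omega)
      have h3 : (U k (n+1))⁻¹ = q ^ k * U k n * (U k (n+1))⁻¹ * (U k n)⁻¹ := by
        unfold QC at this
        rw [min_self, zpow_natCast] at this
        have h4 : q ^ k = U k n * U k (n+1) * (U k n)⁻¹ * (U k (n+1))⁻¹ := by rw [this]; group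
        have h5 : q ^ k * U k n = U k n * q ^ k := ((hqc _).pow_left k).eq
        have h6 : q ^ k * (U k n * (U k (n+1))⁻¹ * (U k n)⁻¹) =
            (U k n * (U k (n+1))⁻¹ * (U k n)⁻¹) * q ^ k := ((hqc _).pow_left k).eq
        rw [mul_assoc, mul_assoc, ← mul_assoc (U k n), h6, h4]
        group
      rw [hUi k (n+1) (by omega), hUi k n (by omega), hU k n (by omega)]
      exact_mod_cast congrArg (Units.val) h3
    have e3 : xivInv M Mi k (n+1) = (q:R)^k * M k (n+1+1) * M k n * Mi k (n+1) * Mi k n := by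
      have hqk : (q:R)^k * M k (n+1+1) = M k (n+1+1) * (q:R)^k :=
        ((show Commute (q:R) _ from hq _).pow_left k).eq
      unfold xivInv
      conv_lhs => rw [e2]
      rw [hqk]
      simp only [mul_assoc]
    have e4 : M k (n+1) * (M k (n+1) * (Mi k (n+1) * Mi k n)) = M k (n+1) * Mi k n := by
      rw [← mul_assoc (M k (n+1)) (Mi k (n+1)), hMiL _ _ (by omega), one_mul]
    rw [e3, e1, xivInv, sub_mul, sub_mul, pow_two]
    simp only [mul_assoc] at e4 ⊢
    rw [e4]; abel
  let b : ℕ → ℤ → R := fun k n => (xivInv M Mi k n - xivInv M Mi k (n+1)) * xiv M Mi (k-1) n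
  have hx : ∀ k n, k ≤ r + 1 → xv M Mi k n = (xU (fun i => U i n) (fun i => U i (n+1)) k : Rˣ) := by
    intro k n h
    simp only [xv, xivInv, xiv, xU, Units.val_mul]
    rw [hU k _ h, hUi k _ h, hU (k-1) _ (by omega), hUi (k-1) _ (by omega)]
  have hB := fun n => bU_eq q hqc (fun i => U i n) (fun i => U i (n+1)) (r+1) (haa n) (haa (n+1)) (hc n)
  have hb : ∀ k n, 1 ≤ k → k ≤ r → b k n = (bU (fun i => U i n) (fun i => U i (n+1)) k : Rˣ) := by
    intro k n h1 h2
    rw [← (hB n k h1 (by omega)).1]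
    simp only [b, hZ k n h1 h2, xiv, Units.val_mul]
    rw [hU (k+1) _ (by omega), hU (k-1) _ (by omega), hUi k _ (by omega), hUi k _ (by omega),
      hUi (k-1) _ (by omega), hU (k-1) _ (by omega)]
  have hzy : ∀ k n, k ≤ r + 1 → xivInv M Mi k n * xiv M Mi k n = 1 := by
    intro k n h
    simp only [xivInv, xiv]
    rw [hU k _ h, hUi k _ h, hU k _ h, hUi k _ h]
    norm_cast
    group
    rfl
  have hyz : ∀ k n, k ≤ r + 1 → xiv M Mi k n * xivInv M Mi k n = 1 := by
    intro k n h
    simp only [xivInv, xiv]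
    rw [hU k _ h, hUi k _ h, hU k _ h, hUi k _ h]
    norm_cast
    group
    rfl
  have hdy : ∀ k n, k ≤ r + 1 → xiv M Mi k (n+1) - xiv M Mi k n = 
      xiv M Mi k (n+1) * ((xivInv M Mi k n - xivInv M Mi k (n+1)) * xiv M Mi k n) := by
    intro k n h
    rw [sub_mul, mul_sub, hzy k n h, mul_one, ← mul_assoc, hyz _ _ h, one_mul]
  have hb2 : ∀ k n, 1 ≤ k → k ≤ r → b k (n+1) =
      xivInv M Mi (k+1) (n+1) * (xiv M Mi k (n+1) - xiv M Mi k n) := by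
    intro k n h1 h2
    have e : (U k n)⁻¹ * (U k n * (U k (n+1))⁻¹) = (U k (n+1))⁻¹ := by group
    have e' := congrArg Units.val e
    rw [hb k _ h1 h2, ← (hB (n+1) k h1 (by omega)).2, hdy k n (by omega), hZ k n h1 h2]
    simp only [xivInv, xiv, Units.val_mul] at e' ⊢
    rw [hU (k+1) _ (by omega), hUi (k+1) _ (by omega), hU k _ (by omega), hUi k _ (by omega),
      hU (k+1) _ (by omega), hU (k-1) _ (by omega), hUi k _ (by omega), hUi k _ (by omega),
      hU k _ (by omega)]
    simp only [mul_assoc, e']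
  have hmono := mono_QC q hqc (fun i => U i 0) (fun i => U i (0+1)) (r+1) (haa 0) (haa (0+1)) (hc 0)
  obtain ⟨m1, m2, m3⟩ := hmono
  have hqi : ∀ z : R, ((q⁻¹ : Rˣ) : R) * z = z * ((q⁻¹ : Rˣ) : R) := fun z =>
    (show Commute (q : R) z from hq z).units_inv_left.eq
  refine PP_comm (q : R) ((q⁻¹ : Rˣ) : R) (by simp) hq hqi (xv M Mi) b r ?_ ?_ ?_ 0 ?_ ?_ ?_ ?_ ?_ ?_ m p
  · intro n
    have h1 : ∀ n, xiv M Mi 0 n = 1 := by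
      intro n
      have := hMiL 0 (n+1) (by omega)
      rw [hM0, one_mul] at this
      simp [xiv, hM0, this]
    simp [xv, b, h1]
  · intro k n h1 h2
    rw [hb2 k n h1 (by omega)]
    simp only [xv, b, Nat.add_sub_cancel]
    noncomm_ring
  · intro k n h1 h2
    rw [hb2 k n h1 (by omega)]
    simp only [xv, b, Nat.add_sub_cancel]
    have f1 := hyz k (n+1) (by omega)
    have f2 := hyz k n (by omega)
    have f1' : ∀ w, xiv M Mi k (n+1) * (xivInv M Mi k (n+1) * w) = w := by
      intro w; rw [← mul_assoc, f1, one_mul]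
    have f2' : ∀ w, xiv M Mi k n * (xivInv M Mi k n * w) = w := by
      intro w; rw [← mul_assoc, f2, one_mul]
    simp only [mul_assoc, sub_mul, mul_sub, f1', f2']
  · intro i j h1 h2 h3 h4
    rw [hx _ _ h2, hx _ _ h4]
    exact congrArg Units.val (m1 i j h1 h2 h3 h4).comm
  · intro i j h1 h2 h3 h4 h5
    rw [hx _ _ h2, hb _ _ h3 h4]
    exact (congrArg Units.val ((m2 i j h1 h2 h3 (by omega)).of_eq 0
      (by split_ifs <;> omega)).comm).symm
  · intro k h1 h2
    rw [hx _ _ (by omega), hb _ _ h1 h2]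
    have := (m2 k k h1 (by omega) h1 (by omega)).of_eq 1 (by split_ifs <;> omega)
    unfold QC at this
    rw [zpow_one] at this
    exact congrArg Units.val this
  · intro k h1 h2
    rw [hx _ _ (by omega), hb _ _ h1 h2]
    have := (m2 (k+1) k (by omega) (by omega) h1 (by omega)).of_eq (-1) (by split_ifs <;> omega)
    unfold QC at this
    rw [zpow_neg_one] at this
    exact congrArg Units.val this
  · intro i j h1 h2 h3
    rw [hb _ _ h1 (by omega), hb _ _ (by omega) h3]
    exact congrArg Units.val ((m3 i j h1 (by omega) (by omega) (by omega)).of_eq 0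
      (by split_ifs <;> omega)).comm
  · intro k h1 h2
    rw [hb _ _ h1 (by omega), hb _ _ (by omega) h2]
    have := (m3 k (k+1) h1 (by omega) (by omega) (by omega)).of_eq 1 (by split_ifs <;> omega)
    unfold QC at this
    rw [zpow_one] at this
    exact congrArg Units.val this
end

section
/- Linear recursion relations: under these hypotheses, the generators M_n := M_{1,n} satisfy the left recursion Σ_{j=0}^{r+1} (−1)^j·C_j·M_{m-j} = 0 for all m ∈ ℤ, and also the right recursion Σ_{j=0}^{r+1} (−1)^j·q^{−j}·M_{m-j}·C_j = 0 for all m ∈ ℤ. -/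
def GMi {R : Type*} [Ring R] (x : ℕ → ℤ → R) (N : ℕ) (m : ℕ) (n : ℤ) : R :=
  ∑ S ∈ Finset.powersetCard m (Finset.Icc 1 N),
    (((S.sort (· ≤ ·)).reverse.zipIdx).map
      (fun ji => x ji.1 (n + ((N : ℤ) - (ji.1 : ℤ)) - (ji.2 : ℤ)))).prod

theorem CMiura_eq {R : Type*} [Ring R] (M Mi : ℕ → ℤ → R) (r m : ℕ) (n : ℤ) :
    CMiura M Mi r m n = GMi (xv M Mi) (r + 1) m n := by
  simp [CMiura, GMi]

theorem sort_insert_max (S : Finset ℕ) (a : ℕ) (h : ∀ b ∈ S, b < a) :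
    (insert a S).sort (· ≤ ·) = S.sort (· ≤ ·) ++ [a] := by
  have ha : a ∉ S := fun h' => lt_irrefl _ (h a h')
  apply List.Perm.eq_of_pairwise (le := (· ≤ ·))
  · intro x y _ _ h1 h2; exact le_antisymm h1 h2
  · exact Finset.pairwise_sort _ _
  · rw [List.pairwise_append]
    refine ⟨Finset.pairwise_sort _ _, by simp, ?_⟩
    intro b hb c hc
    simp at hb hc
    subst hc
    exact (h b hb).le
  · rw [← Multiset.coe_eq_coe, ← Multiset.coe_add]
    simp [Finset.insert_val_of_notMem ha]
    rw [add_comm, Multiset.singleton_add]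

theorem GMi_zero {R : Type*} [Ring R] (x : ℕ → ℤ → R) (N : ℕ) (n : ℤ) :
    GMi x N 0 n = 1 := by
  simp [GMi]

theorem GMi_gt {R : Type*} [Ring R] (x : ℕ → ℤ → R) (N m : ℕ) (n : ℤ) (h : N < m) :
    GMi x N m n = 0 := by
  unfold GMi
  rw [Finset.powersetCard_eq_empty.2 (by simpa using h)]
  simp

theorem GMi_succ {R : Type*} [Ring R] (x : ℕ → ℤ → R) (N m : ℕ) (n : ℤ) :
    GMi x (N + 1) (m + 1) n = GMi x N (m + 1) (n + 1) + x (N + 1) n * GMi x N m n := by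
  have hI : Finset.Icc 1 (N + 1) = insert (N + 1) (Finset.Icc 1 N) := by
    ext y; simp; omega
  have hn : N + 1 ∉ Finset.Icc 1 N := by simp
  unfold GMi
  rw [hI, Finset.powersetCard_succ_insert hn, Finset.sum_union, Finset.sum_image, Finset.mul_sum]
  · congr 1
    · apply Finset.sum_congr rfl
      intro S _
      congr 1
      apply List.map_congr_left
      intro ji _
      congr 1
      push_cast; ring
    · apply Finset.sum_congr rfl
      intro S hS
      have hS' := (Finset.mem_powersetCard.1 hS).1
      rw [sort_insert_max S (N + 1) (fun b hb => by
        have := Finset.mem_Icc.1 (hS' hb); omega)]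
      rw [List.reverse_append, List.reverse_singleton, List.singleton_append, List.zipIdx_cons',
        List.map_cons, List.prod_cons, List.map_map]
      congr 1
      · simp
      · congr 1
        apply List.map_congr_left
        intro ji _
        simp only [Function.comp, Prod.map, id]
        congr 1
        push_cast; ring
  · intro S hS T hT hST
    have h1 : N + 1 ∉ S := fun h => hn ((Finset.mem_powersetCard.1 hS).1 h)
    have h2 : N + 1 ∉ T := fun h => hn ((Finset.mem_powersetCard.1 hT).1 h)
    rw [← Finset.erase_insert h1, ← Finset.erase_insert h2, hST]
  · rw [Finset.disjoint_left]
    intro S hS hT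
    obtain ⟨T, _, rfl⟩ := Finset.mem_image.1 hT
    exact hn ((Finset.mem_powersetCard.1 hS).1 (Finset.mem_insert_self _ _))

theorem GMi_shift {R : Type*} [Ring R] (x e : ℕ → ℤ → R) (r : ℕ)
    (E1 : ∀ n, x 1 n - x 1 (n + 1) = e 1 n)
    (E2 : ∀ a n, a + 1 ≤ r → x (a + 2) n - x (a + 2) (n + 1) = e (a + 2) n - e (a + 1) (n + 1))
    (E3 : ∀ a n, a + 1 ≤ r → e (a + 1) (n + 1) * x (a + 1) n = x (a + 2) (n + 1) * e (a + 1) n) :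
    ∀ a m n, a ≤ r →
      GMi x (a + 1) (m + 1) (n + 1) = GMi x (a + 1) (m + 1) n - e (a + 1) n * GMi x a m n := by
  intro a
  induction a with
  | zero =>
    intro m n _
    rw [GMi_succ, GMi_succ, GMi_gt x 0 (m + 1) _ (by omega), GMi_gt x 0 (m + 1) _ (by omega),
      zero_add, zero_add, ← E1]
    have : GMi x 0 m (n + 1) = GMi x 0 m n := by
      cases m with
      | zero => rw [GMi_zero, GMi_zero]
      | succ m => rw [GMi_gt x 0 (m + 1) _ (by omega), GMi_gt x 0 (m + 1) _ (by omega)]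
    rw [this]
    noncomm_ring
  | succ a ih =>
    intro m n ha
    have e2 : e (a + 2) n = x (a + 2) n - x (a + 2) (n + 1) + e (a + 1) (n + 1) := by
      rw [E2 a n ha]; abel
    rw [GMi_succ x (a + 1) m (n + 1), GMi_succ x (a + 1) m n, ih m (n + 1) (by omega)]
    show _ = _ - e (a + 2) n * _
    rw [e2]
    cases m with
    | zero => simp only [GMi_zero]; noncomm_ring
    | succ m =>
      rw [ih m n (by omega)]
      have h1 : GMi x a (m + 1) (n + 1) = GMi x (a + 1) (m + 1) n - x (a + 1) n * GMi x a m n := by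
        rw [GMi_succ]; abel
      rw [h1]
      have h3 := E3 a n ha
      have h4 : e (a + 1) (n + 1) * (GMi x (a + 1) (m + 1) n - x (a + 1) n * GMi x a m n)
        = e (a + 1) (n + 1) * GMi x (a + 1) (m + 1) n
          - x (a + 2) (n + 1) * e (a + 1) n * GMi x a m n := by
        rw [← h3]; noncomm_ring
      rw [h4]
      show _ + x (a + 2) (n + 1) * _ = _ + x (a + 2) n * _ - _
      noncomm_ring

theorem GMi_const {R : Type*} [Ring R] (x e : ℕ → ℤ → R) (r : ℕ)
    (E1 : ∀ n, x 1 n - x 1 (n + 1) = e 1 n)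
    (E2 : ∀ a n, a + 1 ≤ r → x (a + 2) n - x (a + 2) (n + 1) = e (a + 2) n - e (a + 1) (n + 1))
    (E3 : ∀ a n, a + 1 ≤ r → e (a + 1) (n + 1) * x (a + 1) n = x (a + 2) (n + 1) * e (a + 1) n)
    (E4 : ∀ n, e (r + 1) n = 0) (m : ℕ) (n : ℤ) : GMi x (r + 1) m n = GMi x (r + 1) m 0 := by
  have h : ∀ n, GMi x (r + 1) m (n + 1) = GMi x (r + 1) m n := by
    intro n
    cases m with
    | zero => rw [GMi_zero, GMi_zero]
    | succ m => rw [GMi_shift x e r E1 E2 E3 r m n le_rfl, E4]; simp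
  induction n using Int.induction_on with
  | zero => rfl
  | succ i ih => rw [h, ih]
  | pred i ih => rw [← ih, ← h]; congr 1; ring

theorem left_zero {R : Type*} [Ring R] (x : ℕ → ℤ → R) (f : ℤ → R)
    (h1 : ∀ n, x 1 n * f n = f (n + 1)) :
    ∀ a n, ∑ j ∈ Finset.range (a + 2),
      (-1 : R) ^ j * GMi x (a + 1) j n * f (n + ((a : ℤ) + 1) - (j : ℤ)) = 0 := by
  intro a
  induction a with
  | zero =>
    intro n
    simp [Finset.sum_range_succ, GMi_zero, GMi_succ, GMi_gt, h1]
  | succ a ih =>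
    intro n
    have A1 := ih (n + 1)
    have A2 := ih n
    rw [Finset.sum_range_succ']
    have hs : ∀ j ∈ Finset.range (a + 2), (-1 : R) ^ (j + 1) * GMi x (a + 1 + 1) (j + 1) n
          * f (n + (((a + 1 : ℕ) : ℤ) + 1) - ((j + 1 : ℕ) : ℤ))
        = (-1 : R) ^ (j + 1) * GMi x (a + 1) (j + 1) (n + 1)
          * f (n + 1 + ((a : ℤ) + 1) - ((j + 1 : ℕ) : ℤ))
        - x (a + 2) n * ((-1 : R) ^ j * GMi x (a + 1) j n * f (n + ((a : ℤ) + 1) - (j : ℤ))) := by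
      intro j _
      rw [GMi_succ]
      have i1 : n + (((a + 1 : ℕ) : ℤ) + 1) - ((j + 1 : ℕ) : ℤ) = n + ((a : ℤ) + 1) - (j : ℤ) := by
        push_cast; ring
      have i2 : n + 1 + ((a : ℤ) + 1) - ((j + 1 : ℕ) : ℤ) = n + ((a : ℤ) + 1) - (j : ℤ) := by
        push_cast; ring
      rw [i1, i2, pow_succ]
      rcases neg_one_pow_eq_or R j with h | h <;> rw [h] <;> noncomm_ring
    rw [Finset.sum_congr rfl hs, Finset.sum_sub_distrib, ← Finset.mul_sum, A2, mul_zero, sub_zero]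
    rw [Finset.sum_range_succ, GMi_gt x (a + 1) (a + 1 + 1) _ (by omega)]
    rw [Finset.sum_range_succ'] at A1
    refine Eq.trans ?_ A1
    have i3 : n + (((a + 1 : ℕ) : ℤ) + 1) - ((0 : ℕ) : ℤ) = n + 1 + ((a : ℤ) + 1) - ((0 : ℕ) : ℤ) := by
      push_cast; ring
    rw [i3]
    simp only [GMi_zero, mul_zero, zero_mul, add_zero]

theorem right_zero {R : Type*} [Ring R] (x : ℕ → ℤ → R) (f : ℤ → R) (s : R) (r : ℕ)
    (hs : ∀ y, s * y = y * s)
    (h1 : ∀ n, s * f n * x 1 n = f (n + 1))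
    (h2 : ∀ (a : ℕ) (n k : ℤ), a + 1 ≤ r → n ≤ k → k ≤ n + a + 1 →
      f k * x (a + 2) n = x (a + 2) n * f k) :
    ∀ a n, a ≤ r → ∑ j ∈ Finset.range (a + 2),
      (-1 : R) ^ j * s ^ j * f (n + ((a : ℤ) + 1) - (j : ℤ)) * GMi x (a + 1) j n = 0 := by
  intro a
  induction a with
  | zero =>
    intro n _
    simp [Finset.sum_range_succ, GMi_zero, GMi_succ, GMi_gt, h1]
  | succ a ih =>
    intro n ha
    have A1 := ih (n + 1) (by omega)
    have A2 := ih n (by omega)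
    rw [Finset.sum_range_succ']
    have hs : ∀ j ∈ Finset.range (a + 2), (-1 : R) ^ (j + 1) * s ^ (j + 1)
          * f (n + (((a + 1 : ℕ) : ℤ) + 1) - ((j + 1 : ℕ) : ℤ)) * GMi x (a + 1 + 1) (j + 1) n
        = (-1 : R) ^ (j + 1) * s ^ (j + 1)
          * f (n + 1 + ((a : ℤ) + 1) - ((j + 1 : ℕ) : ℤ)) * GMi x (a + 1) (j + 1) (n + 1)
        - s * x (a + 2) n * ((-1 : R) ^ j * s ^ j * f (n + ((a : ℤ) + 1) - (j : ℤ))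
          * GMi x (a + 1) j n) := by
      intro j hj
      have hj := Finset.mem_range.1 hj
      rw [GMi_succ]
      have i1 : n + (((a + 1 : ℕ) : ℤ) + 1) - ((j + 1 : ℕ) : ℤ) = n + ((a : ℤ) + 1) - (j : ℤ) := by
        push_cast; ring
      have i2 : n + 1 + ((a : ℤ) + 1) - ((j + 1 : ℕ) : ℤ) = n + ((a : ℤ) + 1) - (j : ℤ) := by
        push_cast; ring
      have c1 := h2 a n (n + ((a : ℤ) + 1) - (j : ℤ)) ha (by omega) (by omega)
      have c2 : s ^ j * x (a + 2) n = x (a + 2) n * s ^ j :=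
        (Commute.pow_left (hs _) j)
      rw [i1, i2]
      generalize f (n + ((a : ℤ) + 1) - (j : ℤ)) = F at *
      have key : s ^ (j + 1) * F * (x (a + 2) n * GMi x (a + 1) j n)
          = s * x (a + 2) n * (s ^ j * F * GMi x (a + 1) j n) := by
        calc _ = s * s ^ j * (F * x (a + 2) n) * GMi x (a + 1) j n := by
              rw [pow_succ']; noncomm_ring
          _ = s * (s ^ j * x (a + 2) n) * F * GMi x (a + 1) j n := by rw [c1]; noncomm_ring
          _ = _ := by rw [c2]; noncomm_ring
      show _ * (_ + x (a + 2) n * _) = _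
      rw [pow_succ (-1 : R) j]
      rcases neg_one_pow_eq_or R j with h | h <;> rw [h]
      · simp only [one_mul, neg_mul, mul_add, key]; abel
      · simp only [one_mul, neg_mul, mul_neg, mul_add, key, mul_one, neg_neg]; abel
    rw [Finset.sum_congr rfl hs, Finset.sum_sub_distrib, ← Finset.mul_sum, A2, mul_zero, sub_zero]
    rw [Finset.sum_range_succ, GMi_gt x (a + 1) (a + 1 + 1) _ (by omega)]
    rw [Finset.sum_range_succ'] at A1
    refine Eq.trans ?_ A1
    have i3 : n + (((a + 1 : ℕ) : ℤ) + 1) - ((0 : ℕ) : ℤ) = n + 1 + ((a : ℤ) + 1) - ((0 : ℕ) : ℤ) := by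
      push_cast; ring
    rw [i3]
    simp only [GMi_zero, mul_zero, add_zero]

theorem inv_swap {R : Type*} [Ring R] {s v c ci : R} (hs : ∀ y, s * y = y * s)
    (hL : c * ci = 1) (hR : ci * c = 1) (h : v * c = s * c * v) : ci * v = s * v * ci := by
  calc ci * v = ci * (v * c) * ci := by rw [mul_assoc, mul_assoc, hL, mul_one]
    _ = ci * (s * c * v) * ci := by rw [h]
    _ = (ci * s) * c * v * ci := by noncomm_ring
    _ = s * (ci * c) * v * ci := by rw [← hs]; noncomm_ring
    _ = _ := by rw [hR, mul_one]

theorem ratio_comm {R : Type*} [Ring R] {s a ai b c : R} (hs : ∀ y, s * y = y * s)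
    (hL : a * ai = 1) (hR : ai * a = 1) (h1 : a * b = s * b * a) (h2 : c * b = s * b * c) :
    b * (ai * c) = ai * c * b := by
  calc b * (ai * c) = ai * (a * b) * (ai * c) := by
        rw [← mul_assoc ai a b, hR, one_mul]
    _ = ai * (s * b * (a * ai) * c) := by rw [h1]; noncomm_ring
    _ = ai * (c * b) := by rw [hL, h2, mul_one]
    _ = _ := by rw [mul_assoc]

theorem inv_comm {R : Type*} [Ring R] {a b bi : R} (hL : b * bi = 1) (hR : bi * b = 1)
    (h : a * b = b * a) : a * bi = bi * a := by
  have := inv_swap (s := (1 : R)) (v := a) (by simp) hL hR (by simpa using h)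
  rw [this, one_mul]

theorem lemY {R : Type*} [Ring R] {s si a ai b bi c w : R} (hs : ∀ y, s * y = y * s)
    (hsi : si * s = 1) (ha : a * ai = 1) (ha' : ai * a = 1)
    (hb : b * bi = 1) (hb' : bi * b = 1) (hab : a * b = s * b * a)
    (hsys : s * c * a = b ^ 2 - w) : b * ai - c * bi = w * bi * ai := by
  have h0 : bi * a = s * a * bi := inv_swap hs hb hb' hab
  have h1 : ai * bi = s * bi * ai := by
    calc ai * bi = ai * (bi * a) * ai := by rw [mul_assoc, mul_assoc, ha, mul_one]
      _ = (ai * s) * a * bi * ai := by rw [h0]; noncomm_ring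
      _ = s * (ai * a) * bi * ai := by rw [← hs]; noncomm_ring
      _ = _ := by rw [ha', mul_one]
  have h2 : s * (c * bi) = s * (b * ai - w * bi * ai) := by
    calc s * (c * bi) = (s * c * a) * ai * bi := by
          rw [mul_assoc (s * c), ha, mul_one, mul_assoc]
      _ = (b ^ 2 - w) * (ai * bi) := by rw [hsys, mul_assoc]
      _ = ((b ^ 2 - w) * s) * bi * ai := by rw [h1]; noncomm_ring
      _ = s * (b * (b * bi) * ai - w * bi * ai) := by rw [← hs]; noncomm_ring
      _ = _ := by rw [hb, mul_one]
  have h3 : c * bi = b * ai - w * bi * ai := by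
    have := congrArg (si * ·) h2
    simpa only [← mul_assoc, hsi, one_mul] using this
  rw [h3]; abel

theorem lemZ {R : Type*} [Ring R] {s si a b bi c ci w : R} (hs : ∀ y, s * y = y * s)
    (hsi : si * s = 1) (hc : c * ci = 1) (hc' : ci * c = 1)
    (hb : b * bi = 1) (hbc : b * c = s * c * b)
    (hsys : s * c * a = b ^ 2 - w) : a * bi - b * ci = - (si * ci * w * bi) := by
  have h0 : ci * b = s * b * ci := inv_swap hs hc hc' hbc
  have h1 : a = si * ci * (b ^ 2 - w) := by
    rw [← hsys, hs c]
    calc a = si * (s * 1) * a := by rw [mul_one, hsi, one_mul]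
      _ = si * (ci * c * s) * a := by rw [hs 1, hc']
      _ = _ := by noncomm_ring
  have h2 : a * bi = si * (ci * b) * (b * bi) - si * ci * w * bi := by
    rw [h1]; noncomm_ring
  rw [h2, h0, hb, ← mul_assoc, ← mul_assoc, hsi]
  noncomm_ring

theorem lemE3 {R : Type*} [Ring R] {s t U v vi w wi a ai b bi c g gi h hi : R}
    (hs : ∀ y, s * y = y * s) (ht : ∀ y, t * y = y * t)
    (hv : v * vi = 1) (hv' : vi * v = 1) (hw' : wi * w = 1)
    (ha : a * ai = 1) (ha' : ai * a = 1) (hb : b * bi = 1)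
    (hg : g * gi = 1) (hg' : gi * g = 1) (hh : h * hi = 1)
    (hab : a * b = t * b * a) (hcb : c * b = t * b * c) (hca : c * a = a * c)
    (hgv : g * v = s * v * g) (hhv : h * v = s * v * h) (hgh : h * g = g * h) :
    U * vi * (b * wi) * (w * ai * (c * bi)) = U * gi * (h * vi) * (g * hi * (c * ai)) := by
  have r1 := ratio_comm ht ha ha' hab hcb
  have r2 := ratio_comm hs hg hg' hgv hhv
  have r3 : gi * h * vi = vi * (gi * h) := inv_comm hv hv' r2.symm
  have r4 : c * ai = ai * c := inv_comm ha ha' hca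
  calc U * vi * (b * wi) * (w * ai * (c * bi)) = U * vi * (b * ((wi * w) * ai * c)) * bi := by
        noncomm_ring
    _ = U * vi * (ai * c) * (b * bi) := by rw [hw', one_mul, r1]; noncomm_ring
    _ = U * vi * (c * ai) := by rw [hb, mul_one, r4]
    _ = U * vi * (gi * g) * (h * hi) * (c * ai) := by rw [hg', hh]; simp
    _ = U * vi * gi * (g * h) * hi * (c * ai) := by noncomm_ring
    _ = U * (vi * (gi * h)) * g * hi * (c * ai) := by rw [← hgh]; noncomm_ring
    _ = _ := by rw [← r3]; noncomm_ring

/-- Y times xi -/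
theorem lemYx {R : Type*} [Ring R] {s U d d' d0 h h' h0 h0' : R}
    (hs : ∀ y, s * y = y * s) (hd : d * d' = 1) (hh : h * h' = 1) (hh' : h' * h = 1)
    (hh0 : h0 * h0' = 1) (hh0' : h0' * h0 = 1)
    (c1 : d * h = h * d) (c2 : h0 * d = s * d * h0) (c3 : d0 * d = s * d * d0)
    (c4 : d0 * h0 = h0 * d0) :
    (U * d) * h' * h0' * (d0 * d') = U * h' * (d0 * h0') := by
  have r1 := ratio_comm hs hh0 hh0' c2 c3
  have r2 := inv_comm hh hh' c1
  have r3 := inv_comm hh0 hh0' c4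
  calc (U * d) * h' * h0' * (d0 * d') = U * (d * h') * (h0' * d0) * d' := by noncomm_ring
    _ = U * h' * (d * (h0' * d0)) * d' := by rw [r2]; noncomm_ring
    _ = U * h' * (h0' * d0) * (d * d') := by rw [r1]; noncomm_ring
    _ = _ := by rw [hd, r3, mul_one]

/-- xi inverse times Z -/
theorem lemXZ {R : Type*} [Ring R] {s si U v v' c c' d b' : R}
    (hs : ∀ y, s * y = y * s) (hsi : si * s = 1)
    (hv' : v' * v = 1) (hc : c * c' = 1) (hc' : c' * c = 1)
    (h : v * c = s * c * v) :
    (U * v') * (si * c' * (v * d) * b') = U * c' * (d * b') := by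
  have r := inv_swap hs hc hc' h
  have hsi' : ∀ y, si * y = y * si := by
    intro y
    have h1 : s * si = 1 := by rw [hs, hsi]
    calc si * y = si * (y * s) * si := by rw [mul_assoc, mul_assoc, h1, mul_one]
      _ = (si * s) * y * si := by rw [← hs]; noncomm_ring
      _ = _ := by rw [hsi, one_mul]
  calc (U * v') * (si * c' * (v * d) * b') = U * v' * (si * (c' * v)) * d * b' := by noncomm_ring
    _ = U * v' * ((si * s) * v * c') * d * b' := by rw [r]; noncomm_ring
    _ = U * (v' * v) * c' * d * b' := by rw [hsi]; noncomm_ring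
    _ = _ := by rw [hv']; noncomm_ring

/-- x commutes with b -/
theorem lemXcomm {R : Type*} [Ring R] {s t b u u0 u0' d d' d0 : R}
    (hs : ∀ y, s * y = y * s) (ht : ∀ y, t * y = y * t)
    (hu0 : u0 * u0' = 1) (hu0' : u0' * u0 = 1) (hd : d * d' = 1) (hd' : d' * d = 1)
    (c1 : b * u = s * u * b) (c2 : b * d = s * d * b)
    (c3 : u0 * b = t * b * u0) (c4 : d0 * b = t * b * d0) :
    b * (u * u0' * (d0 * d')) = (u * u0' * (d0 * d')) * b := by
  have r1 := ratio_comm ht hu0 hu0' c3 c4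
  have r2 := inv_swap hs hd hd' c2
  calc b * (u * u0' * (d0 * d')) = (b * u) * (u0' * d0) * d' := by noncomm_ring
    _ = s * (u * (b * (u0' * d0)) * d') := by rw [c1]; noncomm_ring
    _ = (s * (u * (u0' * d0))) * b * d' := by rw [r1]; noncomm_ring
    _ = u * (u0' * d0) * (s * b * d') := by rw [hs]; noncomm_ring
    _ = _ := by rw [← r2]; noncomm_ring

theorem quantum_Q_linear_recursion
    {R : Type*} [Ring R] (q A Δ : Rˣ)
    (hq : ∀ x : R, (q : R) * x = x * (q : R))
    (r : ℕ) (hr : 1 ≤ r)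
    (M Mi : ℕ → ℤ → R)
    (hM0 : ∀ n : ℤ, M 0 n = 1)
    (hMtop : ∀ n : ℤ, M (r + 2) n = 0)
    (hMiL : ∀ (α : ℕ) (n : ℤ), α ≤ r + 1 → M α n * Mi α n = 1)
    (hMiR : ∀ (α : ℕ) (n : ℤ), α ≤ r + 1 → Mi α n * M α n = 1)
    (hMsys : ∀ (α : ℕ) (n : ℤ), 1 ≤ α → α ≤ r + 1 →
      (q : R) ^ α * M α (n + 1) * M α (n - 1) = M α n ^ 2 - M (α + 1) n * M (α - 1) n)
    (hcom : ∀ (α β ε : ℕ) (n : ℤ), ε ≤ 1 → α ≤ r + 1 → β ≤ r + 1 →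
      M α n * M β (n + (ε : ℤ)) = (q : R) ^ (ε * min α β) * M β (n + (ε : ℤ)) * M α n)
    (hAΔ : ∀ n : ℤ, M (r + 1) n = ((A ^ n : Rˣ) : R) * (Δ : R))
    (hΔM : ∀ (α : ℕ) (n : ℤ), 1 ≤ α → α ≤ r + 1 →
      (Δ : R) * M α n = ((q ^ ((α : ℤ) * n) : Rˣ) : R) * M α n * (Δ : R))
    (hAM : ∀ (α : ℕ) (n : ℤ), 1 ≤ α → α ≤ r + 1 →
      (A : R) * M α n = ((q ^ (-(α : ℤ)) : Rˣ) : R) * M α n * (A : R))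
    (hΔA : (Δ : R) * (A : R) = (q : R) ^ (r + 1) * (A : R) * (Δ : R))
    (hext : ∀ (α β : ℕ) (n p : ℤ), α ≤ r + 1 → β ≤ r + 1 →
      |p| ≤ |(β : ℤ) - (α : ℤ)| + 1 →
      M α n * M β (n + p) = ((q ^ (p * ((min α β : ℕ) : ℤ)) : Rˣ) : R) * M β (n + p) * M α n) :
    ∀ m : ℤ,
      (∑ j ∈ Finset.range (r + 2), (-1 : R) ^ j * CMiura M Mi r j 0 * M 1 (m - (j : ℤ))) = 0
      ∧ (∑ j ∈ Finset.range (r + 2),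
          (-1 : R) ^ j * ((q ^ (-(j : ℤ)) : Rˣ) : R) * M 1 (m - (j : ℤ)) * CMiura M Mi r j 0) = 0 := by
  have hqp : ∀ (k : ℕ) (y : R), (q : R) ^ k * y = y * (q : R) ^ k := fun k y =>
    Commute.pow_left (hq y) k
  have hqi : ∀ y : R, ((q⁻¹ : Rˣ) : R) * y = y * ((q⁻¹ : Rˣ) : R) := fun y =>
    Commute.units_inv_left (show Commute (q : R) y from hq y)
  have hqz : ∀ (k : ℤ) (y : R), ((q ^ k : Rˣ) : R) * y = y * ((q ^ k : Rˣ) : R) := fun k y =>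
    Commute.units_zpow_left (show Commute (q : R) y from hq y) k
  have hqk : ∀ k : ℕ, ((q⁻¹ : Rˣ) : R) ^ k * (q : R) ^ k = 1 := by
    intro k
    rw [← Units.val_pow_eq_pow_val, ← Units.val_pow_eq_pow_val, ← Units.val_mul]
    simp
  have hMi0 : ∀ n, Mi 0 n = 1 := by
    intro n
    have := hMiL 0 n (by omega)
    rwa [hM0, one_mul] at this
  have com0 : ∀ (α β : ℕ) (n : ℤ), α ≤ r + 1 → β ≤ r + 1 → M α n * M β n = M β n * M α n := by
    intro α β n h1 h2
    simpa using hcom α β 0 n (by omega) h1 h2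
  have com1 : ∀ (α β k : ℕ) (n n' : ℤ), α ≤ r + 1 → β ≤ r + 1 → k = min α β → n' = n + 1 →
      M α n * M β n' = (q : R) ^ k * M β n' * M α n := by
    intro α β k n n' h1 h2 hk hn
    subst hk hn
    simpa using hcom α β 1 n le_rfl h1 h2
  have sys : ∀ (a : ℕ) (n : ℤ), a ≤ r →
      (q : R) ^ (a + 1) * M (a + 1) (n + 1 + 1) * M (a + 1) n
        = M (a + 1) (n + 1) ^ 2 - M (a + 2) (n + 1) * M a (n + 1) := by
    intro a n ha
    have := hMsys (a + 1) (n + 1) (by omega) (by omega)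
    simpa using this
  let e : ℕ → ℤ → R := fun α n =>
    M (α + 1) (n + 1) * Mi α (n + 1) * (M (α - 1) n * Mi α n)
  have Y : ∀ (a : ℕ) (n : ℤ), a ≤ r → xivInv M Mi (a + 1) n - xivInv M Mi (a + 1) (n + 1)
      = M (a + 2) (n + 1) * M a (n + 1) * Mi (a + 1) (n + 1) * Mi (a + 1) n := by
    intro a n ha
    exact lemY (hqp (a + 1)) (hqk (a + 1)) (hMiL _ _ (by omega)) (hMiR _ _ (by omega))
      (hMiL _ _ (by omega)) (hMiR _ _ (by omega))
      (com1 _ _ _ _ _ (by omega) (by omega) (by omega) rfl) (sys a n ha)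
  have Yx : ∀ (a : ℕ) (n : ℤ), a ≤ r →
      (xivInv M Mi (a + 1) n - xivInv M Mi (a + 1) (n + 1)) * xiv M Mi a n = e (a + 1) n := by
    intro a n ha
    rw [Y a n ha]
    exact lemYx (hqp a) (hMiL _ _ (by omega)) (hMiL _ _ (by omega)) (hMiR _ _ (by omega))
      (hMiL _ _ (by omega)) (hMiR _ _ (by omega)) (com0 _ _ _ (by omega) (by omega))
      (com1 _ _ _ _ _ (by omega) (by omega) (by omega) rfl)
      (com1 _ _ _ _ _ (by omega) (by omega) (by omega) rfl)
      (com0 _ _ _ (by omega) (by omega))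
  have E1 : ∀ n, xv M Mi 1 n - xv M Mi 1 (n + 1) = e 1 n := by
    intro n
    rw [← Yx 0 n (by omega)]
    simp [xv, xiv, hM0, hMi0]
  have XZ : ∀ (a : ℕ) (n : ℤ), a + 1 ≤ r →
      xivInv M Mi (a + 2) (n + 1) * (xiv M Mi (a + 1) n - xiv M Mi (a + 1) (n + 1))
        = - e (a + 1) (n + 1) := by
    intro a n ha
    have hZ : xiv M Mi (a + 1) n - xiv M Mi (a + 1) (n + 1) = _ :=
      lemZ (hqp (a + 1)) (hqk (a + 1)) (hMiL _ _ (by omega)) (hMiR _ _ (by omega))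
      (hMiL _ _ (by omega))
      (com1 _ _ _ _ _ (by omega) (by omega) (by omega) rfl) (sys a n (by omega))
    rw [hZ, mul_neg]
    congr 1
    exact lemXZ (hqp (a + 1)) (hqk (a + 1)) (hMiR _ _ (by omega)) (hMiL _ _ (by omega))
      (hMiR _ _ (by omega)) (com1 _ _ _ _ _ (by omega) (by omega) (by omega) rfl)
  have E2 : ∀ a n, a + 1 ≤ r →
      xv M Mi (a + 2) n - xv M Mi (a + 2) (n + 1) = e (a + 2) n - e (a + 1) (n + 1) := by
    intro a n ha
    have h1 := Yx (a + 1) n ha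
    have h2 := XZ a n ha
    rw [sub_eq_add_neg (e (a + 2) n), ← h2]
    rw [show e (a + 2) n = e (a + 1 + 1) n from rfl, ← h1]
    show xivInv M Mi (a + 2) n * xiv M Mi (a + 1) n
      - xivInv M Mi (a + 2) (n + 1) * xiv M Mi (a + 1) (n + 1) = _
    show _ = (xivInv M Mi (a + 2) n - xivInv M Mi (a + 2) (n + 1)) * _ + _
    noncomm_ring
  have E3 : ∀ a n, a + 1 ≤ r →
      e (a + 1) (n + 1) * xv M Mi (a + 1) n = xv M Mi (a + 2) (n + 1) * e (a + 1) n := by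
    intro a n ha
    exact lemE3 (hqp (a + 1)) (hqp a) (hMiL _ _ (by omega)) (hMiR _ _ (by omega))
      (hMiR _ _ (by omega)) (hMiL _ _ (by omega)) (hMiR _ _ (by omega)) (hMiL _ _ (by omega))
      (hMiL _ _ (by omega)) (hMiR _ _ (by omega)) (hMiL _ _ (by omega))
      (com1 _ _ _ _ _ (by omega) (by omega) (by omega) rfl)
      (com1 _ _ _ _ _ (by omega) (by omega) (by omega) rfl)
      (com0 _ _ _ (by omega) (by omega))
      (com1 _ _ _ _ _ (by omega) (by omega) (by omega) rfl)
      (com1 _ _ _ _ _ (by omega) (by omega) (by omega) rfl)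
      (com0 _ _ _ (by omega) (by omega))
  have E4 : ∀ n, e (r + 1) n = 0 := by
    intro n
    show M (r + 2) (n + 1) * _ * _ = 0
    rw [hMtop]; simp
  have hC := GMi_const (xv M Mi) e r E1 E2 E3 E4
  have x1 : ∀ n, xv M Mi 1 n = M 1 (n + 1) * Mi 1 n := by
    intro n
    simp [xv, xiv, xivInv, hM0, hMi0]
  have ext1 : ∀ (β : ℕ) (K n : ℤ), 1 ≤ β → β ≤ r + 1 → |n - K| ≤ β →
      M 1 K * M β n = ((q ^ (n - K) : Rˣ) : R) * M β n * M 1 K := by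
    intro β K n h1 h2 h3
    have := hext 1 β K (n - K) (by omega) h2 (by
      rw [abs_of_nonneg (by push_cast; omega : (0 : ℤ) ≤ (β : ℤ) - ((1 : ℕ) : ℤ))]
      push_cast; omega)
    rw [min_eq_left h1] at this
    simpa using this
  have ext2 : ∀ (β : ℕ) (K n : ℤ), 1 ≤ β → β ≤ r + 1 → |K - n| ≤ β →
      M β n * M 1 K = ((q ^ (K - n) : Rˣ) : R) * M 1 K * M β n := by
    intro β K n h1 h2 h3
    have := hext β 1 n (K - n) h2 (by omega) (by
      rw [abs_sub_comm (((1 : ℕ) : ℤ)),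
        abs_of_nonneg (by push_cast; omega : (0 : ℤ) ≤ (β : ℤ) - ((1 : ℕ) : ℤ))]
      push_cast; omega)
    rw [min_eq_right h1] at this
    simpa using this
  have hl1 : ∀ n, xv M Mi 1 n * M 1 n = M 1 (n + 1) := by
    intro n
    rw [x1, mul_assoc, hMiR 1 n (by omega), mul_one]
  have hr1 : ∀ n, ((q⁻¹ : Rˣ) : R) * M 1 n * xv M Mi 1 n = M 1 (n + 1) := by
    intro n
    have h := com1 1 1 1 n (n + 1) (by omega) (by omega) (by simp) rfl
    rw [x1, mul_assoc, ← mul_assoc (M 1 n), h, pow_one, mul_assoc (q : R), mul_assoc (q : R),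
      mul_assoc (M 1 (n + 1)), hMiL 1 n (by omega), mul_one, Units.inv_mul_cancel_left]
  have hr2 : ∀ (a : ℕ) (n k : ℤ), a + 1 ≤ r → n ≤ k → k ≤ n + a + 1 →
      M 1 k * xv M Mi (a + 2) n = xv M Mi (a + 2) n * M 1 k := by
    intro a n k ha h1 h2
    exact lemXcomm (hqz (n + 1 - k)) (hqz (k - n)) (hMiL _ _ (by omega)) (hMiR _ _ (by omega))
      (hMiL _ _ (by omega)) (hMiR _ _ (by omega))
      (ext1 _ _ _ (by omega) (by omega) (by rw [abs_le]; push_cast; omega))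
      (ext1 _ _ _ (by omega) (by omega) (by rw [abs_le]; push_cast; omega))
      (ext2 _ _ _ (by omega) (by omega) (by rw [abs_le]; push_cast; omega))
      (ext2 _ _ _ (by omega) (by omega) (by rw [abs_le]; push_cast; omega))
  intro m
  constructor
  · have := left_zero (xv M Mi) (M 1) hl1 r (m - ((r : ℤ) + 1))
    rw [← this]
    apply Finset.sum_congr rfl
    intro j _
    rw [CMiura_eq, hC j (m - ((r : ℤ) + 1)), sub_add_cancel]
  · have := right_zero (xv M Mi) (M 1) ((q⁻¹ : Rˣ) : R) r hqi hr1 hr2 r (m - ((r : ℤ) + 1)) le_rfl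
    rw [← this]
    apply Finset.sum_congr rfl
    intro j _
    rw [CMiura_eq, hC j (m - ((r : ℤ) + 1)), sub_add_cancel, zpow_neg, zpow_natCast, ← inv_pow,
      Units.val_pow_eq_pow_val]
end
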